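/- Let (z_j) be a normalized block basis of the natural basis of X_p (i.e., the z_j have pairwise disjoint, consecutively ordered finite supports and ‖z_j‖ = 1), let (E_j) be pairwise disjoint subsets of ℕ with E_j contained in the support of z_j, and let c, δ > 0 satisfy, for all j: (a) |z_{j|E_j}|_2 ≥ δ·|z_j|_2 and (b) c·|z_{j|E_j}|_2 ≥ ω(E_j)^{(p-2)/(2p)}. Then the map Px = ∑_j |z_{j|E_j}|_2^{-2} ⟨z_{j|E_j}, x⟩ z_j defines a bounded linear projection from X_p onto the closed linear span of (z_j) with ‖P‖ ≤ max{δ^{-1}, c}. -/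

import Mathlib

open scoped ENNReal

noncomputable section

/-- The sequence space `ℓ_p` (of real sequences), for a real exponent `p`. -/
abbrev SeqP (p : ℝ) := lp (fun _ : ℕ => ℝ) (ENNReal.ofReal p)

/-- The sequence space `ℓ_2` (of real sequences). -/
abbrev Seq2 := lp (fun _ : ℕ => ℝ) 2

/-- The space `X_{p,w}`, realized as the submodule of `ℓ_p ⊕_∞ ℓ_2` consisting of the
pairs `(x, y)` with `y n = w n * x n`.  Since the norm on the product is the maximum of
the two norms, this is exactly the completion of the finitely supported sequences under
`‖a‖ = max {|a|_p, |a|_{2,w}}`, the element with coordinates `a` being identified with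
the pair `(a, w·a)`. -/
def XpwMod (p : ℝ) (w : ℕ → ℝ) : Submodule ℝ (SeqP p × Seq2) where
  carrier := {z | ∀ n, (z.2 : ℕ → ℝ) n = w n * (z.1 : ℕ → ℝ) n}
  add_mem' := by
    intro a b ha hb n
    simp only [Prod.fst_add, Prod.snd_add, lp.coeFn_add, Pi.add_apply, ha n, hb n]
    ring
  zero_mem' := by
    intro n
    simp
  smul_mem' := by
    intro c a ha n
    simp only [Prod.smul_fst, Prod.smul_snd, lp.coeFn_smul, Pi.smul_apply, ha n,
      smul_eq_mul]
    ring

/-- The space `X_{p,w}` with its natural norm `‖a‖ = max {|a|_p, |a|_{2,w}}`. -/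
def Xpw (p : ℝ) (w : ℕ → ℝ) : Type := ↥(XpwMod p w)

variable {p : ℝ} {w : ℕ → ℝ}

instance [Fact (1 ≤ ENNReal.ofReal p)] : NormedAddCommGroup (Xpw p w) :=
  inferInstanceAs (NormedAddCommGroup ↥(XpwMod p w))

instance [Fact (1 ≤ ENNReal.ofReal p)] : NormedSpace ℝ (Xpw p w) :=
  inferInstanceAs (NormedSpace ℝ ↥(XpwMod p w))

/-- The pair of coordinates (in `ℓ_p` and in weighted `ℓ_2`) of an element of `X_{p,w}`. -/
def Xpw.pair (x : Xpw p w) : SeqP p × Seq2 := (show ↥(XpwMod p w) from x).val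

/-- The underlying sequence of coordinates of an element of `X_{p,w}`. -/
def seq (x : Xpw p w) : ℕ → ℝ := (Xpw.pair x).1

/-- `|x|_p` for `x ∈ X_{p,w}`. -/
def nrmP (x : Xpw p w) : ℝ := ‖(Xpw.pair x).1‖

/-- `|x|_2 = |x|_{2,w}` for `x ∈ X_{p,w}`. -/
def nrm2 (x : Xpw p w) : ℝ := ‖(Xpw.pair x).2‖

/-- The ratio `r(x) = |x|_2 / |x|_p`. -/
def ratio (x : Xpw p w) : ℝ := nrm2 x / nrmP x

/-- `ω(E) = ∑_{n ∈ E} w_n^{2p/(p-2)}`. -/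
def omegaE (p : ℝ) (w : ℕ → ℝ) (E : Set ℕ) : ℝ :=
  ∑' n : E, w (n : ℕ) ^ (2 * p / (p - 2))

/-- The pairing `⟨x, y⟩ = ∑_n x_n y_n w_n²`. -/
def pairW (w : ℕ → ℝ) (x y : Xpw p w) : ℝ :=
  ∑' n, seq x n * seq y n * w n ^ 2

/-- `w` is a weight sequence suitable for Rosenthal's space `X_p`: it is positive and for
every `ε > 0`, `∑_{w_n < ε} w_n^{2p/(p-2)} = ∞`. -/
def IsXpWeight (p : ℝ) (w : ℕ → ℝ) : Prop :=
  (∀ n, 0 < w n) ∧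
    ∀ ε : ℝ, 0 < ε →
      (∑' n : {n : ℕ | w n < ε}, ENNReal.ofReal (w (n : ℕ) ^ (2 * p / (p - 2)))) = ⊤

theorem memℓp_indicator {q : ℝ≥0∞} (E : Set ℕ) {f : ℕ → ℝ} (hf : Memℓp f q) :
    Memℓp (E.indicator f) q := by
  rcases ENNReal.trichotomy q with hq | hq | hq
  · subst hq
    refine memℓp_zero ((memℓp_zero_iff.mp hf).subset ?_)
    intro i hi
    simp only [Set.mem_setOf_eq] at hi ⊢
    intro h
    exact hi (by simp [Set.indicator_apply, h])
  · subst hq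
    obtain ⟨C, hC⟩ := (memℓp_infty_iff.mp hf)
    refine memℓp_infty ⟨C, ?_⟩
    rintro x ⟨i, rfl⟩
    exact le_trans (norm_indicator_le_norm_self f i) (hC ⟨i, rfl⟩)
  · refine memℓp_gen (Summable.of_nonneg_of_le (fun i => ?_) (fun i => ?_)
      (hf.summable hq))
    · positivity
    · exact Real.rpow_le_rpow (norm_nonneg _) (norm_indicator_le_norm_self f i) hq.le

/-- The restriction `x ↦ x_{|E}` of elements of `X_{p,w}` to a set `E` of coordinates. -/
def restrict (E : Set ℕ) (x : Xpw p w) : Xpw p w :=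
  show ↥(XpwMod p w) from
  ⟨(⟨E.indicator ((Xpw.pair x).1 : ℕ → ℝ), memℓp_indicator E (lp.memℓp (Xpw.pair x).1)⟩,
    ⟨E.indicator ((Xpw.pair x).2 : ℕ → ℝ), memℓp_indicator E (lp.memℓp (Xpw.pair x).2)⟩), by
    intro n
    by_cases hn : n ∈ E
    · show E.indicator ((Xpw.pair x).2 : ℕ → ℝ) n = w n * E.indicator ((Xpw.pair x).1 : ℕ → ℝ) n
      rw [Set.indicator_of_mem hn, Set.indicator_of_mem hn]
      exact (show ↥(XpwMod p w) from x).2 n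
    · show E.indicator ((Xpw.pair x).2 : ℕ → ℝ) n = w n * E.indicator ((Xpw.pair x).1 : ℕ → ℝ) n
      rw [Set.indicator_of_notMem hn, Set.indicator_of_notMem hn, mul_zero]⟩

/-! The coefficient `x ↦ |z_{j|E_j}|₂⁻² ⟨z_{j|E_j}, x⟩` only sees `x_{|E_j}`, so Cauchy–Schwarz
bounds it by `|z_{j|E_j}|₂⁻¹ |x_{|E_j}|₂`. With (a) the `j`-th term of the series has `|·|₂`-norm at
most `δ⁻¹ |x_{|E_j}|₂`; with Hölder's inequality `|x_{|E_j}|₂ ≤ |x_{|E_j}|_p ω(E_j)^{(p-2)/(2p)}`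
and (b) its `|·|_p`-norm is at most `c |x_{|E_j}|_p`. As the terms are disjointly supported, and so
are the `x_{|E_j}`, both bounds add up, in `ℓ_p` and in `ℓ_2`: the series converges and its sum has
norm at most `max {δ⁻¹, c} ‖x‖`. The coefficients are biorthogonal to `(z_j)`, which makes the sum a
projection. -/

section DisjointSupport

variable {ι α F : Type*}

theorem apply_sum_of_subsingleton_support {M N : Type*} [AddCommMonoid M] [AddCommMonoid N]
    {φ : M → N} (hφ : φ 0 = 0) {u : ι → M} (hu : (Function.support u).Subsingleton)
    (s : Finset ι) : φ (∑ j ∈ s, u j) = ∑ j ∈ s, φ (u j) := by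
  by_cases h : ∃ k ∈ s, u k ≠ 0
  · obtain ⟨k, hks, hk⟩ := h
    have hzero : ∀ j, j ≠ k → u j = 0 := fun j hjk => by_contra fun hj => hjk (hu hj hk)
    rw [Finset.sum_eq_single_of_mem k hks fun j _ hj => hzero j hj,
      Finset.sum_eq_single_of_mem k hks fun j _ hj => by rw [hzero j hj, hφ]]
  · push Not at h
    rw [Finset.sum_eq_zero h, hφ, Finset.sum_eq_zero fun j hj => by rw [h j hj, hφ]]

theorem subsingleton_support_eval_of_disjoint_support [Zero F] {v : ι → α → F}
    (hv : Pairwise (Function.onFun Disjoint fun j => Function.support (v j))) (n : α) :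
    (Function.support fun j => v j n).Subsingleton := fun _ hi _ hj =>
  by_contra fun hij => Set.disjoint_left.mp (hv hij) hi hj

variable [NormedAddCommGroup F] {q : ℝ≥0∞} {v : ι → lp (fun _ : α => F) q}

theorem norm_rpow_eq_tsum_of_coe_eq_indicator (hq : 0 < q.toReal) {E : Set α}
    {u x : lp (fun _ : α => F) q} (hu : (u : α → F) = E.indicator x) :
    ‖u‖ ^ q.toReal = ∑' n : E, ‖x n‖ ^ q.toReal := by
  rw [lp.norm_rpow_eq_tsum hq, tsum_subtype E fun n => ‖x n‖ ^ q.toReal]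
  refine tsum_congr fun n => ?_
  by_cases hn : n ∈ E
  · rw [hu, Set.indicator_of_mem hn, Set.indicator_of_mem hn]
  · rw [hu, Set.indicator_of_notMem hn, Set.indicator_of_notMem hn, norm_zero,
      Real.zero_rpow hq.ne']

theorem norm_sum_rpow_of_disjoint_support (hq : 0 < q.toReal)
    (hv : Pairwise (Function.onFun Disjoint fun j => Function.support (v j : α → F)))
    (s : Finset ι) : ‖∑ j ∈ s, v j‖ ^ q.toReal = ∑ j ∈ s, ‖v j‖ ^ q.toReal := by
  refine (lp.hasSum_norm hq _).unique ?_
  convert hasSum_sum (s := s) fun j _ => lp.hasSum_norm hq (v j) using 2 with n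
  rw [lp.coeFn_sum, Finset.sum_apply]
  exact apply_sum_of_subsingleton_support (φ := fun a : F => ‖a‖ ^ q.toReal)
    (by rw [norm_zero, Real.zero_rpow hq.ne'])
    (subsingleton_support_eval_of_disjoint_support hv n) s

theorem sum_norm_rpow_le_of_coe_eq_indicator (hq : 0 < q.toReal) {E : ι → Set α}
    (hE : Pairwise (Function.onFun Disjoint E)) {u : ι → lp (fun _ : α => F) q}
    {x : lp (fun _ : α => F) q} (hu : ∀ j, (u j : α → F) = (E j).indicator x) (s : Finset ι) :
    ∑ j ∈ s, ‖u j‖ ^ q.toReal ≤ ‖x‖ ^ q.toReal := by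
  have hsupp : ∀ j, Function.support (u j : α → F) ⊆ E j := fun j => by
    rw [hu j]
    exact Set.support_indicator_subset
  rw [← norm_sum_rpow_of_disjoint_support hq fun i j hij => (hE hij).mono (hsupp i) (hsupp j)]
  refine Real.rpow_le_rpow (lp.norm_nonneg' _)
    (lp.norm_mono (ENNReal.toReal_pos_iff.mp hq).1.ne' fun n => ?_) hq.le
  rw [lp.coeFn_sum, Finset.sum_apply, Finset.sum_congr rfl fun j _ => congrFun (hu j) n,
    ← Finset.indicator_biUnion_apply _ _ fun i _ j _ hij => hE hij]
  exact norm_indicator_le_norm_self _ _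

variable [Fact (1 ≤ q)]

theorem sum_norm_rpow_le_of_norm_le_indicator (hq : 0 < q.toReal) {E : ι → Set α}
    (hE : Pairwise (Function.onFun Disjoint E)) {u : ι → lp (fun _ : α => F) q}
    {x : lp (fun _ : α => F) q} (hu : ∀ j, (u j : α → F) = (E j).indicator x) {K : ℝ} (hK : 0 ≤ K)
    (hvu : ∀ j, ‖v j‖ ≤ K * ‖u j‖) (s : Finset ι) :
    ∑ j ∈ s, ‖v j‖ ^ q.toReal ≤ (K * ‖x‖) ^ q.toReal :=
  calc ∑ j ∈ s, ‖v j‖ ^ q.toReal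
      ≤ ∑ j ∈ s, (K * ‖u j‖) ^ q.toReal := by gcongr with j; exact hvu j
    _ = K ^ q.toReal * ∑ j ∈ s, ‖u j‖ ^ q.toReal := by
        simp only [Real.mul_rpow hK (norm_nonneg _), Finset.mul_sum]
    _ ≤ K ^ q.toReal * ‖x‖ ^ q.toReal := by
        gcongr
        exact sum_norm_rpow_le_of_coe_eq_indicator hq hE hu s
    _ = (K * ‖x‖) ^ q.toReal := (Real.mul_rpow hK (norm_nonneg _)).symm

theorem summable_of_disjoint_support_of_sum_norm_rpow_le [CompleteSpace F] (hq : 0 < q.toReal)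
    (hv : Pairwise (Function.onFun Disjoint fun j => Function.support (v j : α → F))) {C : ℝ}
    (hC : ∀ s : Finset ι, ∑ j ∈ s, ‖v j‖ ^ q.toReal ≤ C) : Summable v := by
  have hsum : Summable fun j => ‖v j‖ ^ q.toReal :=
    summable_of_sum_le (fun j => by positivity) hC
  rw [summable_iff_vanishing_norm] at hsum ⊢
  intro ε hε
  obtain ⟨s, hs⟩ := hsum (ε ^ q.toReal) (by positivity)
  refine ⟨s, fun t ht => (Real.rpow_lt_rpow_iff (norm_nonneg _) hε.le hq).mp ?_⟩
  rw [norm_sum_rpow_of_disjoint_support hq hv]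
  exact (le_abs_self _).trans_lt (hs t ht)

theorem norm_tsum_le_of_disjoint_support_of_sum_norm_rpow_le (hq : 0 < q.toReal)
    (hv : Pairwise (Function.onFun Disjoint fun j => Function.support (v j : α → F))) {C : ℝ}
    (hC0 : 0 ≤ C) (hC : ∀ s : Finset ι, ∑ j ∈ s, ‖v j‖ ^ q.toReal ≤ C ^ q.toReal) :
    ‖∑' j, v j‖ ≤ C := by
  by_cases hsum : Summable v
  · refine le_of_tendsto hsum.hasSum.norm (.of_forall fun s => ?_)
    rw [← Real.rpow_le_rpow_iff (norm_nonneg _) hC0 hq, norm_sum_rpow_of_disjoint_support hq hv]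
    exact hC s
  · rwa [tsum_eq_zero_of_not_summable hsum, norm_zero]

end DisjointSupport

section Biorthogonal

variable {ι 𝕜 X : Type*} [NontriviallyNormedField 𝕜] [NormedAddCommGroup X] [NormedSpace 𝕜 X]
  {f : ι → X →ₗ[𝕜] 𝕜} {z : ι → X}

theorem exists_clm_eq_tsum (hsum : ∀ x, Summable fun j => f j x • z j) {C : ℝ} (hC : 0 ≤ C)
    (hbound : ∀ x, ‖∑' j, f j x • z j‖ ≤ C * ‖x‖) :
    ∃ P : X →L[𝕜] X, (∀ x, P x = ∑' j, f j x • z j) ∧ ‖P‖ ≤ C := by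
  let P : X →ₗ[𝕜] X :=
    { toFun := fun x => ∑' j, f j x • z j
      map_add' := fun x y => by
        simp only [map_add, add_smul, (hsum x).tsum_add (hsum y)]
      map_smul' := fun r x => by
        simp only [map_smul, smul_assoc, (hsum x).tsum_const_smul, RingHom.id_apply] }
  exact ⟨P.mkContinuous C hbound, fun _ => rfl, P.mkContinuous_norm_le hC hbound⟩

theorem isProj_topologicalClosure_span_of_biorthogonal (hself : ∀ j, f j (z j) = 1)
    (hne : Pairwise fun i j => f i (z j) = 0) {P : X →L[𝕜] X}
    (hP : ∀ x, P x = ∑' j, f j x • z j) :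
    LinearMap.IsProj (Submodule.span 𝕜 (Set.range z)).topologicalClosure (P : X →ₗ[𝕜] X) where
  map_mem x := by
    rw [ContinuousLinearMap.coe_coe, hP]
    exact tsum_mem (Submodule.isClosed_topologicalClosure _) fun j => Submodule.smul_mem _ _
      (Submodule.le_topologicalClosure _ (Submodule.subset_span ⟨j, rfl⟩))
  map_id := by
    have hPz : ∀ k, P (z k) = z k := fun k => by
      rw [hP, tsum_eq_single k fun j hj => by rw [hne hj, zero_smul], hself, one_smul]
    have hspan : Submodule.span 𝕜 (Set.range z) ≤
        LinearMap.eqLocus (P : X →ₗ[𝕜] X) LinearMap.id :=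
      Submodule.span_le.mpr (Set.range_subset_iff.mpr hPz)
    exact Submodule.topologicalClosure_minimal _ hspan
      (isClosed_eq P.continuous continuous_id)

end Biorthogonal

section Coordinates

theorem nrmP_nonneg (x : Xpw p w) : 0 ≤ nrmP x := lp.norm_nonneg' _

theorem nrm2_nonneg (x : Xpw p w) : 0 ≤ nrm2 x := norm_nonneg _

theorem pair_snd_apply (x : Xpw p w) (n : ℕ) : x.pair.2 n = w n * seq x n :=
  (show ↥(XpwMod p w) from x).2 n

theorem coe_pair_fst_restrict (E : Set ℕ) (x : Xpw p w) :
    ((restrict E x).pair.1 : ℕ → ℝ) = E.indicator x.pair.1 := rfl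

theorem coe_pair_snd_restrict (E : Set ℕ) (x : Xpw p w) :
    ((restrict E x).pair.2 : ℕ → ℝ) = E.indicator x.pair.2 := rfl

theorem support_pair_snd_subset (x : Xpw p w) :
    Function.support (x.pair.2 : ℕ → ℝ) ⊆ Function.support (seq x) := fun n hn h =>
  hn (by rw [pair_snd_apply, h, mul_zero])

theorem support_seq_restrict_subset (E : Set ℕ) (x : Xpw p w) :
    Function.support (seq (restrict E x)) ⊆ Function.support (seq x) := by
  rw [seq, coe_pair_fst_restrict, Set.support_indicator]
  exact Set.inter_subset_right

theorem pairW_eq_inner (x y : Xpw p w) : pairW w x y = inner ℝ x.pair.2 y.pair.2 := by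
  rw [lp.inner_eq_tsum, pairW]
  refine tsum_congr fun n => ?_
  rw [pair_snd_apply, pair_snd_apply, RCLike.inner_apply, conj_trivial]
  ring

theorem pairW_eq_zero_of_disjoint_support {x y : Xpw p w}
    (h : Disjoint (Function.support (seq x)) (Function.support (seq y))) : pairW w x y = 0 := by
  have hmul : ∀ n, seq x n * seq y n = 0 := fun n => by
    by_contra hn
    exact Set.disjoint_left.mp h (left_ne_zero_of_mul hn) (right_ne_zero_of_mul hn)
  simp only [pairW, hmul, zero_mul, tsum_zero]

theorem pairW_restrict_left (E : Set ℕ) (x y : Xpw p w) :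
    pairW w (restrict E x) y = pairW w (restrict E x) (restrict E y) := by
  refine tsum_congr fun n => ?_
  by_cases hn : n ∈ E
  · rw [seq, seq, seq, coe_pair_fst_restrict, coe_pair_fst_restrict, Set.indicator_of_mem hn,
      Set.indicator_of_mem hn]
  · rw [seq, coe_pair_fst_restrict, Set.indicator_of_notMem hn, zero_mul, zero_mul,
      zero_mul, zero_mul]

theorem abs_pairW_restrict_le (E : Set ℕ) (x y : Xpw p w) :
    |pairW w (restrict E x) y| ≤ nrm2 (restrict E x) * nrm2 (restrict E y) := by
  rw [pairW_restrict_left, pairW_eq_inner]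
  exact abs_real_inner_le_norm _ _

end Coordinates

section Norm

variable [Fact (1 ≤ ENNReal.ofReal p)]

theorem zero_lt_toReal_ofReal_of_fact : 0 < (ENNReal.ofReal p).toReal := by
  have hp : 1 ≤ p := ENNReal.one_le_ofReal.mp Fact.out
  rw [ENNReal.toReal_ofReal (by linarith)]
  linarith

theorem norm_eq_max_nrmP_nrm2 (x : Xpw p w) : ‖x‖ = max (nrmP x) (nrm2 x) := rfl

theorem nrmP_smul (a : ℝ) (x : Xpw p w) : nrmP (a • x) = |a| * nrmP x :=
  norm_smul a x.pair.1

theorem nrm2_smul (a : ℝ) (x : Xpw p w) : nrm2 (a • x) = |a| * nrm2 x :=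
  norm_smul a x.pair.2

theorem nrm2_pos (hw : ∀ n, w n ≠ 0) {x : Xpw p w} (hx : x ≠ 0) : 0 < nrm2 x := by
  refine norm_pos_iff.mpr fun h2 => hx ?_
  have h1 : x.pair.1 = 0 := by
    ext n
    have hn : w n * seq x n = 0 := by rw [← pair_snd_apply, h2, lp.coeFn_zero, Pi.zero_apply]
    exact (mul_eq_zero.mp hn).resolve_left (hw n)
  exact Subtype.ext (Prod.ext h1 h2)

theorem isClosed_XpwMod : IsClosed (XpwMod p w : Set (SeqP p × Seq2)) := by
  have hcoord (q : ℝ≥0∞) [Fact (1 ≤ q)] (n : ℕ) :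
      Continuous fun y : lp (fun _ : ℕ => ℝ) q => y n := (lp.lipschitzWith_one_eval q n).continuous
  have hset : (XpwMod p w : Set (SeqP p × Seq2)) = ⋂ n, {y | y.2 n = w n * y.1 n} := by
    ext y
    rw [Set.mem_iInter]
    exact Iff.rfl
  rw [hset]
  exact isClosed_iInter fun n => isClosed_eq ((hcoord 2 n).comp continuous_snd)
    (((hcoord _ n).comp continuous_fst).const_mul (w n))

theorem hasSum_iff_hasSum_pair {ι : Type*} {v : ι → Xpw p w} {x : Xpw p w} :
    HasSum v x ↔ HasSum (fun j => (v j).pair) x.pair :=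
  (Topology.IsInducing.hasSum_iff (g := (XpwMod p w).subtype) .subtypeVal v x).symm

theorem summable_of_summable_pair {ι : Type*} {v : ι → Xpw p w}
    (hP : Summable fun j => (v j).pair.1) (h2 : Summable fun j => (v j).pair.2) : Summable v := by
  have hpair : HasSum (fun j => (v j).pair) (∑' j, (v j).pair) :=
    (hP.hasSum.prodMk h2.hasSum).summable.hasSum
  have hmem : ∑' j, (v j).pair ∈ XpwMod p w :=
    tsum_mem isClosed_XpwMod fun j => (show ↥(XpwMod p w) from v j).2
  exact ⟨⟨_, hmem⟩, hasSum_iff_hasSum_pair.mpr hpair⟩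

end Norm

section Series

variable [Fact (1 ≤ ENNReal.ofReal p)] {ι : Type*} {v : ι → Xpw p w} {E : ι → Set ℕ} {x : Xpw p w}
  {c d : ℝ}

theorem summable_of_nrm_le_nrm_restrict
    (hv : Pairwise (Function.onFun Disjoint fun j => Function.support (seq (v j))))
    (hE : Pairwise (Function.onFun Disjoint E)) (hc : 0 ≤ c) (hd : 0 ≤ d)
    (hP : ∀ j, nrmP (v j) ≤ c * nrmP (restrict (E j) x))
    (h2 : ∀ j, nrm2 (v j) ≤ d * nrm2 (restrict (E j) x)) : Summable v := by
  have hv2 : Pairwise (Function.onFun Disjoint fun j => Function.support ((v j).pair.2 : ℕ → ℝ)) :=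
    fun i j hij => (hv hij).mono (support_pair_snd_subset _) (support_pair_snd_subset _)
  exact summable_of_summable_pair
    (summable_of_disjoint_support_of_sum_norm_rpow_le zero_lt_toReal_ofReal_of_fact hv
      (sum_norm_rpow_le_of_norm_le_indicator zero_lt_toReal_ofReal_of_fact hE
        (fun j => coe_pair_fst_restrict (E j) x) hc hP))
    (summable_of_disjoint_support_of_sum_norm_rpow_le (by simp) hv2
      (sum_norm_rpow_le_of_norm_le_indicator (by simp) hE
        (fun j => coe_pair_snd_restrict (E j) x) hd h2))

theorem norm_tsum_le_of_nrm_le_nrm_restrict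
    (hv : Pairwise (Function.onFun Disjoint fun j => Function.support (seq (v j))))
    (hE : Pairwise (Function.onFun Disjoint E)) (hc : 0 ≤ c) (hd : 0 ≤ d)
    (hP : ∀ j, nrmP (v j) ≤ c * nrmP (restrict (E j) x))
    (h2 : ∀ j, nrm2 (v j) ≤ d * nrm2 (restrict (E j) x)) : ‖∑' j, v j‖ ≤ max d c * ‖x‖ := by
  have hv2 : Pairwise (Function.onFun Disjoint fun j => Function.support ((v j).pair.2 : ℕ → ℝ)) :=
    fun i j hij => (hv hij).mono (support_pair_snd_subset _) (support_pair_snd_subset _)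
  have hpair := hasSum_iff_hasSum_pair.mp (summable_of_nrm_le_nrm_restrict hv hE hc hd hP h2).hasSum
  have hbP : ‖∑' j, (v j).pair.1‖ ≤ c * nrmP x :=
    norm_tsum_le_of_disjoint_support_of_sum_norm_rpow_le zero_lt_toReal_ofReal_of_fact hv
      (mul_nonneg hc (nrmP_nonneg _))
      (sum_norm_rpow_le_of_norm_le_indicator zero_lt_toReal_ofReal_of_fact hE
        (fun j => coe_pair_fst_restrict (E j) x) hc hP)
  have hb2 : ‖∑' j, (v j).pair.2‖ ≤ d * nrm2 x :=
    norm_tsum_le_of_disjoint_support_of_sum_norm_rpow_le (by simp) hv2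
      (mul_nonneg hd (nrm2_nonneg _))
      (sum_norm_rpow_le_of_norm_le_indicator (by simp) hE
        (fun j => coe_pair_snd_restrict (E j) x) hd h2)
  have hfst : ∑' j, (v j).pair.1 = (∑' j, v j).pair.1 :=
    (hpair.map (AddMonoidHom.fst _ _) continuous_fst).tsum_eq
  have hsnd : ∑' j, (v j).pair.2 = (∑' j, v j).pair.2 :=
    (hpair.map (AddMonoidHom.snd _ _) continuous_snd).tsum_eq
  rw [hfst] at hbP
  rw [hsnd] at hb2
  rw [norm_eq_max_nrmP_nrm2 (∑' j, v j)]
  refine max_le (hbP.trans ?_) (hb2.trans ?_)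
  · exact mul_le_mul (le_max_right _ _) (le_max_left _ _) (norm_nonneg _) (le_max_of_le_left hd)
  · exact mul_le_mul (le_max_left _ _) (le_max_right _ _) (norm_nonneg _) (le_max_of_le_left hd)

end Series

section Holder

theorem nrmP_restrict_rpow (hp : 0 < p) (E : Set ℕ) (x : Xpw p w) :
    nrmP (restrict E x) ^ p = ∑' n : E, |seq x n| ^ p := by
  have h := norm_rpow_eq_tsum_of_coe_eq_indicator (q := ENNReal.ofReal p)
    (by rwa [ENNReal.toReal_ofReal hp.le]) (coe_pair_fst_restrict E x)
  rwa [ENNReal.toReal_ofReal hp.le] at h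

theorem nrm2_restrict_sq (E : Set ℕ) (x : Xpw p w) :
    nrm2 (restrict E x) ^ 2 = ∑' n : E, seq x n ^ 2 * w n ^ 2 := by
  have h := norm_rpow_eq_tsum_of_coe_eq_indicator (by simp) (coe_pair_snd_restrict E x)
  simp only [ENNReal.toReal_ofNat, Real.rpow_ofNat] at h
  rw [nrm2, h]
  refine tsum_congr fun n => ?_
  rw [pair_snd_apply, Real.norm_eq_abs, sq_abs, mul_pow, mul_comm]

theorem holderConjugate_half_div_sub_two (hp : 2 < p) : (p / 2).HolderConjugate (p / (p - 2)) := by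
  have : p - 2 ≠ 0 := by linarith
  rw [Real.holderConjugate_iff]
  refine ⟨by linarith, ?_⟩
  field_simp
  ring

theorem omegaE_nonneg (hw : ∀ n, 0 ≤ w n) (E : Set ℕ) : 0 ≤ omegaE p w E :=
  tsum_nonneg fun n => Real.rpow_nonneg (hw n) _

theorem nrm2_restrict_le (hp : 2 < p) (hw : ∀ n, 0 ≤ w n) {E : Set ℕ}
    (hE : Summable fun n : E => w n ^ (2 * p / (p - 2))) (x : Xpw p w) :
    nrm2 (restrict E x) ≤ nrmP (restrict E x) * omegaE p w E ^ ((p - 2) / (2 * p)) := by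
  have hp0 : 0 < p := by linarith
  have hp2 : p - 2 ≠ 0 := by linarith
  have hω := omegaE_nonneg (p := p) hw E
  have hseq : ∀ n, (seq x n ^ 2) ^ (p / 2) = |seq x n| ^ p := fun n => by
    rw [← sq_abs, ← Real.rpow_two, ← Real.rpow_mul (abs_nonneg _), mul_div_cancel₀ p two_ne_zero]
  have hweight : ∀ n, (w n ^ 2) ^ (p / (p - 2)) = w n ^ (2 * p / (p - 2)) := fun n => by
    rw [← Real.rpow_two, ← Real.rpow_mul (hw n), mul_div_assoc]
  have hsummable : Summable fun n : E => |seq x n| ^ p := by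
    have h := (lp.memℓp x.pair.1).summable (by rwa [ENNReal.toReal_ofReal hp0.le])
    rw [ENNReal.toReal_ofReal hp0.le] at h
    exact h.subtype E
  have hsq : nrm2 (restrict E x) ^ 2 ≤
      (nrmP (restrict E x) ^ p) ^ (1 / (p / 2)) * omegaE p w E ^ (1 / (p / (p - 2))) := by
    have h := Real.inner_le_Lp_mul_Lq_tsum_of_nonneg (holderConjugate_half_div_sub_two hp)
      (f := fun n : E => seq x n ^ 2) (g := fun n : E => w n ^ 2) (fun _ => sq_nonneg _)
      (fun _ => sq_nonneg _) (by simpa only [hseq] using hsummable)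
      (by simpa only [hweight] using hE)
    simp only [hseq, hweight] at h
    rwa [nrm2_restrict_sq, nrmP_restrict_rpow hp0]
  refine le_of_sq_le_sq ?_ (mul_nonneg (nrmP_nonneg _) (Real.rpow_nonneg hω _))
  refine hsq.trans_eq ?_
  rw [mul_pow, ← Real.rpow_mul (nrmP_nonneg _), ← Real.rpow_mul_natCast hω, ← Real.rpow_natCast]
  congr 2 <;> push_cast <;> field_simp

end Holder

section BlockCoeff

variable [Fact (1 ≤ ENNReal.ofReal p)] {E : Set ℕ} {z : Xpw p w} {c δ : ℝ}

/-- The coefficient functional `x ↦ |z_{|E}|₂⁻² ⟨z_{|E}, x⟩` of the projection attached to `z` and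
`E`. It is `0` by the convention `0⁻¹ = 0` when `|z_{|E}|₂ = 0`. -/
def blockCoeff (E : Set ℕ) (z : Xpw p w) : Xpw p w →ₗ[ℝ] ℝ where
  toFun x := (nrm2 (restrict E z) ^ 2)⁻¹ * pairW w (restrict E z) x
  map_add' x y := by
    have h : (x + y).pair.2 = x.pair.2 + y.pair.2 := rfl
    rw [pairW_eq_inner, pairW_eq_inner, pairW_eq_inner, h, inner_add_right, mul_add]
  map_smul' r x := by
    have h : (r • x).pair.2 = r • x.pair.2 := rfl
    rw [pairW_eq_inner, pairW_eq_inner, h, real_inner_smul_right, mul_left_comm, RingHom.id_apply,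
      smul_eq_mul]

theorem blockCoeff_apply (E : Set ℕ) (z x : Xpw p w) :
    blockCoeff E z x = (nrm2 (restrict E z) ^ 2)⁻¹ * pairW w (restrict E z) x := rfl

theorem blockCoeff_self (h : nrm2 (restrict E z) ≠ 0) : blockCoeff E z z = 1 := by
  rw [blockCoeff_apply, pairW_restrict_left, pairW_eq_inner, real_inner_self_eq_norm_sq]
  exact inv_mul_cancel₀ (pow_ne_zero 2 h)

theorem blockCoeff_eq_zero_of_disjoint_support {x : Xpw p w}
    (h : Disjoint (Function.support (seq z)) (Function.support (seq x))) :
    blockCoeff E z x = 0 := by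
  rw [blockCoeff_apply,
    pairW_eq_zero_of_disjoint_support (h.mono_left (support_seq_restrict_subset E z)), mul_zero]

theorem abs_blockCoeff_le (E : Set ℕ) (z x : Xpw p w) :
    |blockCoeff E z x| ≤ (nrm2 (restrict E z))⁻¹ * nrm2 (restrict E x) := by
  rw [blockCoeff_apply, abs_mul, abs_inv, abs_sq]
  calc (nrm2 (restrict E z) ^ 2)⁻¹ * |pairW w (restrict E z) x|
      ≤ (nrm2 (restrict E z) ^ 2)⁻¹ * (nrm2 (restrict E z) * nrm2 (restrict E x)) := by
        gcongr
        exact abs_pairW_restrict_le E z x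
    _ = (nrm2 (restrict E z))⁻¹ * nrm2 (restrict E x) := by
        rcases eq_or_ne (nrm2 (restrict E z)) 0 with h | h
        · simp [h]
        · field_simp

theorem nrm2_blockCoeff_smul_le (hδ : 0 < δ) (ha : δ * nrm2 z ≤ nrm2 (restrict E z))
    (x : Xpw p w) : nrm2 (blockCoeff E z x • z) ≤ δ⁻¹ * nrm2 (restrict E x) := by
  have hN : 0 ≤ nrm2 (restrict E z) := nrm2_nonneg _
  have hM : 0 ≤ nrm2 (restrict E x) := nrm2_nonneg _
  have hz : nrm2 z ≤ δ⁻¹ * nrm2 (restrict E z) := (le_inv_mul_iff₀ hδ).mpr ha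
  rw [nrm2_smul]
  calc |blockCoeff E z x| * nrm2 z
      ≤ (nrm2 (restrict E z))⁻¹ * nrm2 (restrict E x) * (δ⁻¹ * nrm2 (restrict E z)) :=
        mul_le_mul (abs_blockCoeff_le E z x) hz (nrm2_nonneg _) (by positivity)
    _ = (nrm2 (restrict E z))⁻¹ * nrm2 (restrict E z) * (δ⁻¹ * nrm2 (restrict E x)) := by ring
    _ ≤ δ⁻¹ * nrm2 (restrict E x) := mul_le_of_le_one_left (by positivity) inv_mul_le_one

theorem nrmP_blockCoeff_smul_le (hp : 2 < p) (hw : ∀ n, 0 ≤ w n)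
    (hE : Summable fun n : E => w n ^ (2 * p / (p - 2))) (hc : 0 ≤ c)
    (hb : nrmP z * omegaE p w E ^ ((p - 2) / (2 * p)) ≤ c * nrm2 (restrict E z)) (x : Xpw p w) :
    nrmP (blockCoeff E z x • z) ≤ c * nrmP (restrict E x) := by
  have hN : 0 ≤ nrm2 (restrict E z) := nrm2_nonneg _
  have hM : 0 ≤ nrmP (restrict E x) := nrmP_nonneg _
  have hz : 0 ≤ nrmP z := nrmP_nonneg _
  set Ω := omegaE p w E ^ ((p - 2) / (2 * p))
  rw [nrmP_smul]
  calc |blockCoeff E z x| * nrmP z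
      ≤ (nrm2 (restrict E z))⁻¹ * (nrmP (restrict E x) * Ω) * nrmP z := by
        gcongr
        exact (abs_blockCoeff_le E z x).trans (by gcongr; exact nrm2_restrict_le hp hw hE x)
    _ = (nrm2 (restrict E z))⁻¹ * nrmP (restrict E x) * (nrmP z * Ω) := by ring
    _ ≤ (nrm2 (restrict E z))⁻¹ * nrmP (restrict E x) * (c * nrm2 (restrict E z)) := by gcongr
    _ = (nrm2 (restrict E z))⁻¹ * nrm2 (restrict E z) * (c * nrmP (restrict E x)) := by ring
    _ ≤ c * nrmP (restrict E x) := mul_le_of_le_one_left (by positivity) inv_mul_le_one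

end BlockCoeff

theorem stmt4_general {ι : Type*} [Fact (1 ≤ ENNReal.ofReal p)] (hp : 2 < p) (hw : ∀ n, 0 < w n)
    {z : ι → Xpw p w} (hz : ∀ j, z j ≠ 0)
    (hzdisj : Pairwise (Function.onFun Disjoint fun j => Function.support (seq (z j))))
    {E : ι → Set ℕ} (hEdisj : Pairwise (Function.onFun Disjoint E))
    (hE : ∀ j, Summable fun n : E j => w n ^ (2 * p / (p - 2)))
    {c δ : ℝ} (hc : 0 ≤ c) (hδ : 0 < δ)
    (ha : ∀ j, δ * nrm2 (z j) ≤ nrm2 (restrict (E j) (z j)))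
    (hb : ∀ j, nrmP (z j) * omegaE p w (E j) ^ ((p - 2) / (2 * p)) ≤
      c * nrm2 (restrict (E j) (z j))) :
    ∃ P : Xpw p w →L[ℝ] Xpw p w,
      (∀ x : Xpw p w, P x =
        ∑' j, ((nrm2 (restrict (E j) (z j)) ^ 2)⁻¹ * pairW w (restrict (E j) (z j)) x) • z j) ∧
      (∀ x : Xpw p w, P (P x) = P x) ∧
      LinearMap.range (P : Xpw p w →ₗ[ℝ] Xpw p w) =
        (Submodule.span ℝ (Set.range z)).topologicalClosure ∧
      ‖P‖ ≤ max δ⁻¹ c := by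
  have hw0 : ∀ n, 0 ≤ w n := fun n => (hw n).le
  have hN : ∀ j, nrm2 (restrict (E j) (z j)) ≠ 0 := fun j =>
    ((mul_pos hδ (nrm2_pos (fun n => (hw n).ne') (hz j))).trans_le (ha j)).ne'
  have hterms : ∀ x, Pairwise (Function.onFun Disjoint fun j =>
      Function.support (seq (blockCoeff (E j) (z j) x • z j))) := fun x i j hij =>
    (hzdisj hij).mono (Function.support_const_smul_subset _ _)
      (Function.support_const_smul_subset _ _)
  have hP x j := nrmP_blockCoeff_smul_le hp hw0 (hE j) hc (hb j) x
  have h2 x j := nrm2_blockCoeff_smul_le hδ (ha j) x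
  have hδ' : 0 ≤ δ⁻¹ := (inv_pos.mpr hδ).le
  obtain ⟨P, hPx, hPnorm⟩ := exists_clm_eq_tsum (f := fun j => blockCoeff (E j) (z j))
    (fun x => summable_of_nrm_le_nrm_restrict (hterms x) hEdisj hc hδ' (hP x) (h2 x))
    (le_max_of_le_left hδ')
    (fun x => norm_tsum_le_of_nrm_le_nrm_restrict (hterms x) hEdisj hc hδ' (hP x) (h2 x))
  have hproj := isProj_topologicalClosure_span_of_biorthogonal (fun j => blockCoeff_self (hN j))
    (fun i j hij => blockCoeff_eq_zero_of_disjoint_support (hzdisj hij)) hPx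
  exact ⟨P, hPx, fun x => hproj.map_id _ (hproj.map_mem x), hproj.range, hPnorm⟩

theorem pairwise_disjoint_support_of_block {ι α F : Type*} [LinearOrder ι] [Preorder α] [Zero F]
    {v : ι → α → F} (hv : ∀ j k, j < k → ∀ m ∈ Function.support (v j),
      ∀ n ∈ Function.support (v k), m < n) :
    Pairwise (Function.onFun Disjoint fun j => Function.support (v j)) :=
  (pairwise_disjoint_on _).mpr fun j k hjk =>
    Set.disjoint_left.mpr fun n hj hk => lt_irrefl n (hv j k hjk n hj n hk)

theorem nrmP_mul_le_of_norm_le_one [Fact (1 ≤ ENNReal.ofReal p)] {x : Xpw p w} (hx : ‖x‖ ≤ 1)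
    {a b : ℝ} (ha : 0 ≤ a) (hab : a ≤ b) : nrmP x * a ≤ b :=
  (mul_le_of_le_one_left ha ((le_max_left _ _).trans hx)).trans hab

/-- Proposition 1.2, the projection: if `(z_j)` is a normalized block basis
of the natural basis of `X_p`, `(E_j)` are pairwise disjoint sets with `E_j` contained in
the support of `z_j`, and (a) `|z_{j|E_j}|_2 ≥ δ |z_j|_2`,
(b) `c |z_{j|E_j}|_2 ≥ ω(E_j)^{(p-2)/(2p)}` for all `j`, then
`P x = ∑_j |z_{j|E_j}|_2⁻² ⟨z_{j|E_j}, x⟩ z_j` defines a bounded linear projection of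
`X_p` onto the closed linear span of `(z_j)` of norm at most `max {δ⁻¹, c}`. -/
theorem stmt4 (p : ℝ) (hp : 2 < p) [Fact (1 ≤ ENNReal.ofReal p)]
    (w : ℕ → ℝ) (hw : IsXpWeight p w)
    (z : ℕ → Xpw p w) (hz1 : ∀ j, ‖z j‖ = 1)
    (hfin : ∀ j, (Function.support (seq (z j))).Finite)
    (hblock : ∀ j k : ℕ, j < k → ∀ m ∈ Function.support (seq (z j)),
      ∀ n ∈ Function.support (seq (z k)), m < n)
    (E : ℕ → Set ℕ) (hE : ∀ j, E j ⊆ Function.support (seq (z j)))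
    (hdisj : Pairwise (Function.onFun Disjoint E))
    (c δ : ℝ) (hc : 0 < c) (hδ : 0 < δ)
    (ha : ∀ j, nrm2 (restrict (E j) (z j)) ≥ δ * nrm2 (z j))
    (hb : ∀ j, c * nrm2 (restrict (E j) (z j)) ≥ omegaE p w (E j) ^ ((p - 2) / (2 * p))) :
    ∃ P : Xpw p w →L[ℝ] Xpw p w,
      (∀ x : Xpw p w, P x =
        ∑' j : ℕ, ((nrm2 (restrict (E j) (z j)) ^ 2)⁻¹ *
          pairW w (restrict (E j) (z j)) x) • z j) ∧
      (∀ x : Xpw p w, P (P x) = P x) ∧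
      LinearMap.range (P : Xpw p w →ₗ[ℝ] Xpw p w) = (Submodule.span ℝ (Set.range z)).topologicalClosure ∧
      ‖P‖ ≤ max δ⁻¹ c := by
  exact stmt4_general hp hw.1 (fun j => norm_ne_zero_iff.mp (by simp [hz1]))
    (pairwise_disjoint_support_of_block hblock) hdisj
    (fun j => have := ((hfin j).subset (hE j)).to_subtype; .of_finite) hc.le hδ ha fun j =>
      nrmP_mul_le_of_norm_le_one (hz1 j).le
        (Real.rpow_nonneg (omegaE_nonneg (fun n => (hw.1 n).le) _) _) (hb j)
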